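/- arXiv:2402.00846 — 5 statements merged into one kernel-verified Lean document; each statement's English description precedes it below -/
import Mathlib

section
/- Let H be a complex Hilbert space and let W and W_n (n ∈ ℕ) be closed subspaces of H. Suppose that: (i) there exists a subspace W̃ ⊆ W that is dense in W such that for every u ∈ W̃ there exists a sequence u_n ∈ W_n with ‖u_n − u‖_H → 0; and (ii) there exists a sequence of closed subspaces W_n⁺ of H with W_n ⊆ W_n⁺ for all n such that W_n⁺ converges to W in the Mosco sense. Then W_n converges to W in the Mosco sense as n → ∞. -/
open Filter Topology
open scoped InnerProductSpace

/-- Mosco convergence of a sequence of closed subspaces `Wₙ` of a Hilbert space `H` to a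
closed subspace `W`: (i) every `u ∈ W` is the strong limit of a sequence `uₙ ∈ Wₙ`;
(ii) every weak limit of a sequence `u_{n_j} ∈ W_{n_j}` along a subsequence lies in `W`. -/
def MoscoConverges {H : Type*} [NormedAddCommGroup H] [InnerProductSpace ℂ H]
    (Wn : ℕ → Submodule ℂ H) (W : Submodule ℂ H) : Prop :=
  (∀ u ∈ W, ∃ v : ℕ → H, (∀ n, v n ∈ Wn n) ∧
      Tendsto (fun n => ‖v n - u‖) atTop (𝓝 0)) ∧
  (∀ (φ : ℕ → ℕ), StrictMono φ → ∀ (v : ℕ → H) (u : H),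
      (∀ j, v j ∈ Wn (φ j)) →
      (∀ w : H, Tendsto (fun j => ⟪v j, w⟫_ℂ) atTop (𝓝 ⟪u, w⟫_ℂ)) → u ∈ W)

/-- Chandler-Wilde–Hewett style criterion for Mosco convergence. If a
dense subspace `W̃` of `W` is approximable by elements of `Wₙ`, and `Wₙ ⊆ Wₙ⁺` for a
sequence of closed subspaces `Wₙ⁺` Mosco-converging to `W`, then `Wₙ` Mosco-converges
to `W`. -/
theorem moscoConverges_of_dense_approx_of_le
    {H : Type*} [NormedAddCommGroup H] [InnerProductSpace ℂ H] [CompleteSpace H]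
    (W : Submodule ℂ H) (Wn : ℕ → Submodule ℂ H)
    (hW : IsClosed (W : Set H)) (hWn : ∀ n, IsClosed (Wn n : Set H))
    (Wt : Submodule ℂ H) (hWtle : Wt ≤ W)
    (hWtdense : closure (Wt : Set H) = (W : Set H))
    (happrox : ∀ u ∈ Wt, ∃ v : ℕ → H, (∀ n, v n ∈ Wn n) ∧
      Tendsto (fun n => ‖v n - u‖) atTop (𝓝 0))
    (Wnp : ℕ → Submodule ℂ H) (hWnp : ∀ n, IsClosed ((Wnp n : Set H)))
    (hle : ∀ n, Wn n ≤ Wnp n)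
    (hMosco : MoscoConverges Wnp W) :
    MoscoConverges Wn W := by
  refine ⟨fun u hu => ?_, fun φ hφ v u hv hw =>
    hMosco.2 φ hφ v u (fun j => hle _ (hv j)) hw⟩
  have hex : ∀ n : ℕ, ∃ y ∈ (Wn n : Set H),
      dist u y < Metric.infDist u (Wn n : Set H) + 1 / ((n : ℝ) + 1) := by
    intro n
    have hpos : (0 : ℝ) < 1 / ((n : ℝ) + 1) := by positivity
    exact (Metric.infDist_lt_iff ⟨0, (Wn n).zero_mem⟩).1 (by linarith)
  choose v hv hvd using hex
  refine ⟨v, hv, ?_⟩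
  rw [Metric.tendsto_atTop]
  intro ε hε
  have huc : u ∈ closure (Wt : Set H) := by rw [hWtdense]; exact hu
  obtain ⟨t, ht, htd⟩ := Metric.mem_closure_iff.1 huc (ε / 3) (by linarith)
  obtain ⟨z, hz, hzt⟩ := happrox t ht
  have h1 : ∀ᶠ n in atTop, ‖z n - t‖ < ε / 3 := hzt.eventually_lt_const (by linarith)
  have h2 : ∀ᶠ n : ℕ in atTop, 1 / ((n : ℝ) + 1) < ε / 3 :=
    (tendsto_one_div_add_atTop_nhds_zero_nat (𝕜 := ℝ)).eventually_lt_const (by linarith)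
  obtain ⟨N, hN⟩ := eventually_atTop.1 (h1.and h2)
  refine ⟨N, fun n hn => ?_⟩
  obtain ⟨ha, hb⟩ := hN n hn
  have hc := hvd n
  have hd : Metric.infDist u (Wn n : Set H) ≤ dist u (z n) :=
    Metric.infDist_le_dist_of_mem (hz n)
  have he := dist_triangle u t (z n)
  rw [← dist_eq_norm, dist_comm] at ha
  rw [Real.dist_eq, sub_zero, abs_norm, ← dist_eq_norm, dist_comm]
  linarith
end

section
/- Let H be a complex Hilbert space, let Σ ⊂ ℂ be open, and let K : Σ → B(H) be an analytic operator-valued function such that K(z) is a compact operator for every z ∈ Σ and sup_{z ∈ Σ} ‖K(z)‖ < +∞. Let (P_n)_{n ∈ ℕ} be a sequence of orthogonal projections on H converging strongly to the identity. Then for every compact set Q ⊆ Σ, sup_{z ∈ Q} ‖K(z) − P_n K(z) P_n‖ → 0 as n → ∞. -/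
open Filter Topology

lemma aux_proj_norm {H : Type*} [NormedAddCommGroup H] [InnerProductSpace ℂ H] [CompleteSpace H]
    (P : H →L[ℂ] H) (h1 : IsIdempotentElem P) (h2 : IsSelfAdjoint P) : ‖P‖ ≤ 1 := by
  have h := CStarRing.norm_star_mul_self (x := P)
  rw [h2.star_eq, h1.eq] at h
  by_contra! hc
  nlinarith

lemma aux_left {H : Type*} [NormedAddCommGroup H] [InnerProductSpace ℂ H] [CompleteSpace H]
    (P : ℕ → (H →L[ℂ] H)) (hP : ∀ n, ‖P n‖ ≤ 1)
    (hs : ∀ x : H, Tendsto (fun n => ‖P n x - x‖) atTop (𝓝 0))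
    (T : H →L[ℂ] H) (hT : IsCompactOperator T) :
    Tendsto (fun n => ‖(1 - P n) * T‖) atTop (𝓝 0) := by
  obtain ⟨M, hM, hsub⟩ := IsCompactOperator.image_closedBall_subset_compact
    (f := (T : H →ₗ[ℂ] H)) hT 1
  have hU : TendstoUniformlyOn (fun n x => P n x) (fun x => x) atTop M := by
    rw [← tendstoLocallyUniformlyOn_iff_tendstoUniformlyOn_of_compact hM,
      Metric.tendstoLocallyUniformlyOn_iff]
    intro ε hε x hx
    refine ⟨Metric.ball x (ε / 3), mem_nhdsWithin_of_mem_nhds (Metric.ball_mem_nhds x (by positivity)), ?_⟩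
    filter_upwards [(hs x).eventually (gt_mem_nhds (show (0:ℝ) < ε / 3 by positivity))] with n hn y hy
    rw [Metric.mem_ball, dist_eq_norm] at hy
    rw [dist_eq_norm]
    have e : y - P n y = (y - x) - (P n x - x) - P n (y - x) := by rw [map_sub]; abel
    have h1 := (P n).le_of_opNorm_le (hP n) (y - x)
    have h2 := norm_sub_le ((y - x) - (P n x - x)) (P n (y - x))
    have h3 := norm_sub_le (y - x) (P n x - x)
    rw [e]
    linarith
  rw [Metric.tendstoUniformlyOn_iff] at hU
  rw [Metric.tendsto_atTop']
  intro ε hε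
  obtain ⟨N, hN⟩ := eventually_atTop.1 (hU (ε / 2) (by positivity))
  refine ⟨N, fun n hn => ?_⟩
  rw [dist_zero_right, norm_norm]
  refine lt_of_le_of_lt ?_ (half_lt_self hε)
  refine ContinuousLinearMap.opNorm_le_of_unit_norm (𝕜 := ℂ) (by positivity) fun x hx => ?_
  have := hN n hn.le (T x) (hsub ⟨x, by simp [hx], rfl⟩)
  rw [dist_eq_norm] at this
  exact this.le

lemma aux_right {H : Type*} [NormedAddCommGroup H] [InnerProductSpace ℂ H] [CompleteSpace H]
    (P : ℕ → (H →L[ℂ] H)) (hP : ∀ n, ‖P n‖ ≤ 1) (hPsa : ∀ n, IsSelfAdjoint (P n))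
    (hs : ∀ x : H, Tendsto (fun n => ‖P n x - x‖) atTop (𝓝 0))
    (T : H →L[ℂ] H) (hT : IsCompactOperator T) :
    Tendsto (fun n => ‖T * (1 - P n)‖) atTop (𝓝 0) := by
  have h := aux_left P hP hs (star T * T) (hT.clm_comp (star T))
  have h2 : Tendsto (fun n => √(‖(1 - P n) * (star T * T)‖ * 2)) atTop (𝓝 0) := by
    simpa using (h.mul_const 2).sqrt
  refine squeeze_zero (fun _ => norm_nonneg _) (fun n => Real.le_sqrt_of_sq_le ?_) h2
  have e : ‖T * (1 - P n)‖ ^ 2 = ‖(1 - P n) * (star T * T) * (1 - P n)‖ := by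
    rw [sq, ← CStarRing.norm_star_mul_self]
    simp [(hPsa n).star_eq, mul_assoc]
  rw [e]
  have h1 : ‖(1 : H →L[ℂ] H)‖ ≤ 1 := ContinuousLinearMap.norm_id_le
  have h3 : ‖1 - P n‖ ≤ 2 := (norm_sub_le _ _).trans (by linarith [hP n])
  exact (norm_mul_le _ _).trans (by gcongr)


/-- Let `K : Σ → B(H)` be an analytic family of compact operators on an
open set `Σ ⊆ ℂ`, uniformly bounded on `Σ`, and let `(Pₙ)` be orthogonal projections on
the complex Hilbert space `H` converging strongly to the identity. Then
`sup_{z ∈ Q} ‖K(z) − Pₙ K(z) Pₙ‖ → 0` for every compact `Q ⊆ Σ`. -/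
theorem truncation_tendstoUniformlyOn_compacts
    {H : Type*} [NormedAddCommGroup H] [InnerProductSpace ℂ H] [CompleteSpace H]
    (S : Set ℂ) (hS : IsOpen S)
    (K : ℂ → (H →L[ℂ] H)) (hKanal : DifferentiableOn ℂ K S)
    (hKcpt : ∀ z ∈ S, IsCompactOperator (K z))
    (hKbdd : ∃ C : ℝ, ∀ z ∈ S, ‖K z‖ ≤ C)
    (P : ℕ → (H →L[ℂ] H))
    (hPproj : ∀ n, IsIdempotentElem (P n))
    (hPsa : ∀ n, IsSelfAdjoint (P n))
    (hPstrong : ∀ x : H, Tendsto (fun n => ‖P n x - x‖) atTop (𝓝 0)) :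
    ∀ Q : Set ℂ, IsCompact Q → Q ⊆ S →
      TendstoUniformlyOn (fun n z => (P n) ∘L (K z) ∘L (P n)) K atTop Q := by

  intro Q hQ hQS
  have hP n := aux_proj_norm (P n) (hPproj n) (hPsa n)
  rw [← tendstoLocallyUniformlyOn_iff_tendstoUniformlyOn_of_compact hQ,
    Metric.tendstoLocallyUniformlyOn_iff]
  intro ε hε z hz
  have hc : Tendsto K (𝓝[Q] z) (𝓝 (K z)) := (hKanal.continuousOn.mono hQS) z hz
  have hl := aux_left P hP hPstrong (K z) (hKcpt z (hQS hz))
  have hr := aux_right P hP hPsa hPstrong (K z) (hKcpt z (hQS hz))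
  have h4 : (0:ℝ) < ε / 4 := by positivity
  refine ⟨_, hc (Metric.ball_mem_nhds _ h4), ?_⟩
  filter_upwards [hl.eventually (gt_mem_nhds h4), hr.eventually (gt_mem_nhds h4)] with n h1 h2 w hw
  rw [Set.mem_preimage, Metric.mem_ball, dist_eq_norm] at hw
  rw [dist_eq_norm]
  have e : K w - P n ∘L K w ∘L P n = (K w - K z) + (1 - P n) * K z + P n * (K z * (1 - P n))
      - P n * ((K w - K z) * P n) := by
    change K w - P n * (K w * P n) = _
    noncomm_ring
  have a1 : ‖P n * (K z * (1 - P n))‖ ≤ 1 * ‖K z * (1 - P n)‖ :=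
    (norm_mul_le _ _).trans (by gcongr; exact hP n)
  have a2 : ‖P n * ((K w - K z) * P n)‖ ≤ 1 * (‖K w - K z‖ * 1) :=
    (norm_mul_le _ _).trans (mul_le_mul (hP n)
      ((norm_mul_le _ _).trans (by gcongr; exact hP n)) (norm_nonneg _) zero_le_one)
  have b1 := norm_sub_le ((K w - K z) + (1 - P n) * K z + P n * (K z * (1 - P n)))
    (P n * ((K w - K z) * P n))
  have b2 := norm_add₃_le (a := K w - K z) (b := (1 - P n) * K z) (c := P n * (K z * (1 - P n)))
  rw [e]
  linarith
end

section
/- Let X > 1 be a real number. For a nonzero integer α define m_α := sign(α)·X·(X^α + (X−1)^α)/(X^α − (X−1)^α). Then: (1) for every integer α > 0, m_α = X + 2X·((X/(X−1))^α − 1)^{−1}; (2) for every integer α < 0, m_α = X − 2X·(1 − ((X−1)/X)^α)^{−1}; and (3) m_α → X as |α| → ∞, i.e. for every ε > 0 there is N such that |m_α − X| < ε whenever |α| ≥ N. -/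
/-- For `X > 1` let `m_α := sign(α)·X·(Xᵅ + (X−1)ᵅ)/(Xᵅ − (X−1)ᵅ)` for
nonzero integers `α` (the diagonal entries of `𝒩^{1/2} γ_Γ S^A 𝒩^{1/2}`). Then
`m_α = X + 2X·((X/(X−1))ᵅ − 1)⁻¹` for `α > 0`, `m_α = X − 2X·(1 − ((X−1)/X)ᵅ)⁻¹` for
`α < 0`, and `m_α → X` as `|α| → ∞`. -/
theorem NtD_annulus_diagonal_entries
    (X : ℝ) (hX : 1 < X) (m : ℤ → ℝ)
    (hm : ∀ α : ℤ, α ≠ 0 →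
      m α = (Int.sign α : ℝ) * X * (X ^ α + (X - 1) ^ α) / (X ^ α - (X - 1) ^ α)) :
    (∀ α : ℤ, 0 < α → m α = X + 2 * X * ((X / (X - 1)) ^ α - 1)⁻¹) ∧
    (∀ α : ℤ, α < 0 → m α = X - 2 * X * (1 - ((X - 1) / X) ^ α)⁻¹) ∧
    (∀ ε : ℝ, 0 < ε → ∃ N : ℕ, ∀ α : ℤ, α ≠ 0 → (N : ℤ) ≤ |α| → |m α - X| < ε) := by
  have hX0 : 0 < X := by linarith
  have hY0 : 0 < X - 1 := by linarith
  have h1 : ∀ α : ℤ, 0 < α → m α = X + 2 * X * ((X / (X - 1)) ^ α - 1)⁻¹ := by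
    intro α hα
    rw [hm α hα.ne', Int.sign_eq_one_of_pos hα, div_zpow]
    have hlt : (X - 1) ^ α < X ^ α := zpow_lt_zpow_left₀ hα hY0.le (by linarith)
    have hb : 0 < (X - 1) ^ α := zpow_pos hY0 α
    generalize X ^ α = a at *
    generalize (X - 1) ^ α = b at *
    have hab : a - b ≠ 0 := by linarith
    have : a / b - 1 = (a - b) / b := by field_simp
    rw [this, inv_div]
    push_cast
    field_simp
    ring
  have h2 : ∀ α : ℤ, α < 0 → m α = X - 2 * X * (1 - ((X - 1) / X) ^ α)⁻¹ := by
    intro α hα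
    rw [hm α hα.ne, Int.sign_eq_neg_one_of_neg hα, div_zpow]
    have hlt : (X - 1) ^ (-α) < X ^ (-α) :=
      zpow_lt_zpow_left₀ (by omega) hY0.le (by linarith)
    have hb : 0 < (X - 1) ^ α := zpow_pos hY0 α
    have ha : 0 < X ^ α := zpow_pos hX0 α
    rw [zpow_neg, zpow_neg, inv_lt_inv₀ hb ha] at hlt
    generalize X ^ α = a at *
    generalize (X - 1) ^ α = b at *
    have hab : a - b ≠ 0 := by linarith
    have : 1 - b / a = (a - b) / a := by field_simp
    rw [this, inv_div]
    push_cast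
    field_simp
    ring
  refine ⟨h1, h2, ?_⟩
  intro ε hε
  have hq : 1 < X / (X - 1) := by rw [one_lt_div hY0]; linarith
  obtain ⟨N, hN⟩ := pow_unbounded_of_one_lt (1 + 2 * X / ε) hq
  refine ⟨N, fun α hα hNα => ?_⟩
  have key : m α = X + 2 * X * ((X / (X - 1)) ^ |α| - 1)⁻¹ := by
    rcases lt_or_gt_of_ne hα with h | h
    · rw [h2 α h, abs_of_neg h, zpow_neg, ← inv_zpow, inv_div,
        ← neg_sub (((X - 1) / X) ^ α) 1, inv_neg]
      ring
    · rw [h1 α h, abs_of_pos h]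
  have hle : (X / (X - 1)) ^ N ≤ (X / (X - 1)) ^ |α| := by
    rw [← zpow_natCast]
    exact zpow_le_zpow_right₀ hq.le hNα
  have hd : 0 < 2 * X / ε := by positivity
  rw [key]
  generalize (X / (X - 1)) ^ |α| = t at *
  have ht : 2 * X / ε < t - 1 := by linarith
  have ht0 : 0 < t - 1 := by linarith
  rw [add_sub_cancel_left, abs_of_pos (by positivity), ← div_eq_mul_inv, div_lt_iff₀ ht0]
  rw [div_lt_iff₀ hε] at ht
  linarith
end

section
/- Let X be a complex Banach space, Σ ⊆ ℂ open and connected, and K : Σ → B(X) analytic with K(z) compact for every z ∈ Σ; set A(z) = I + K(z) and assume A(z̃) is invertible for some z̃ ∈ Σ. Then for every z₀ ∈ Σ there exist: an open neighbourhood V ⊆ Σ of z₀; analytic operator-valued functions W₁, W₂ : V → B(X) such that W₁(z) and W₂(z) are invertible for all z ∈ V; a natural number M; bounded linear projections P₀, P₁, …, P_M on X (each idempotent) that are mutually disjoint (P_i P_j = 0 for i ≠ j) with rank P_j = 1 for 1 ≤ j ≤ M and P₀ + P₁ + ⋯ + P_M = I; and positive integers l₁, …, l_M; such that A(z) = W₁(z)·(P₀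 + Σ_{j=1}^{M} (z − z₀)^{l_j} P_j)·W₂(z) for all z ∈ V. -/
open Filter Topology

lemma gs_smith_sum {R : Type*} [CommRing R] (π : R)
    (hπ : ∀ x : R, x = 0 ∨ ∃ (u : R) (k : ℕ), IsUnit u ∧ x = π ^ k * u) (n : ℕ) :
    ∀ M : Matrix (Fin n) (Fin n) R, ∃ U V : Matrix (Fin n) (Fin n) R, IsUnit U ∧ IsUnit V ∧
      ∃ d : Fin n → R, (∀ i, d i = 0 ∨ ∃ k : ℕ, d i = π ^ k) ∧
        M = U * Matrix.diagonal d * V := by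
  induction n with
  | zero =>
    intro M
    exact ⟨1, 1, isUnit_one, isUnit_one, 0, fun i => i.elim0, Subsingleton.elim _ _⟩
  | succ n ih =>
    intro M
    classical
    by_cases hM : M = 0
    · exact ⟨1, 1, isUnit_one, isUnit_one, 0, fun i => Or.inl rfl, by simp [hM]⟩
    have hex : ∃ k : ℕ, ∃ i j, ∃ u : R, IsUnit u ∧ M i j = π ^ k * u := by
      by_contra hcon
      push Not at hcon
      apply hM
      ext i j
      rcases hπ (M i j) with h | ⟨u, k, hu, h⟩
      · exact h
      · exact absurd h (hcon k i j u hu)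
    set k := Nat.find hex with hk
    obtain ⟨i₀, j₀, u, hu, hM0⟩ := Nat.find_spec hex
    have hdiv : ∀ i j, ∃ g, M i j = π ^ k * g := by
      intro i j
      rcases hπ (M i j) with h | ⟨u, k', hu, h⟩
      · exact ⟨0, by simp [h]⟩
      · have : k ≤ k' := Nat.find_min' hex ⟨i, j, u, hu, h⟩
        refine ⟨π ^ (k' - k) * u, ?_⟩
        rw [h, ← mul_assoc, ← pow_add, Nat.add_sub_cancel' this]
    choose g₀ hg₀ using hdiv
    let g : Matrix (Fin (n+1)) (Fin (n+1)) R :=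
      Matrix.of fun i j => if i = i₀ ∧ j = j₀ then u else g₀ i j
    have hg : ∀ i j, g i j = if i = i₀ ∧ j = j₀ then u else g₀ i j := fun i j => rfl
    have hMg : M = π ^ k • g := by
      ext i j
      simp only [hg, Matrix.smul_apply, smul_eq_mul]
      split_ifs with h
      · rw [h.1, h.2, hM0]
      · exact hg₀ i j
    -- equivalence
    obtain ⟨e₀⟩ : Nonempty (Unit ⊕ Fin n ≃ Fin (n+1)) :=
      ⟨Fintype.equivOfCardEq (by simp [add_comm])⟩
    let e₁ : Unit ⊕ Fin n ≃ Fin (n+1) := e₀.trans (Equiv.swap (e₀ (Sum.inl ())) i₀)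
    let e₂ : Unit ⊕ Fin n ≃ Fin (n+1) := e₀.trans (Equiv.swap (e₀ (Sum.inl ())) j₀)
    have he₁ : e₁ (Sum.inl ()) = i₀ := by simp [e₁]
    have he₂ : e₂ (Sum.inl ()) = j₀ := by simp [e₂]
    let g' : Matrix (Unit ⊕ Fin n) (Unit ⊕ Fin n) R := g.submatrix e₁ e₂
    let a := g'.toBlocks₁₁
    have ha : IsUnit a := by
      rw [Matrix.isUnit_iff_isUnit_det]
      simp [Matrix.det_unique, a, g', Matrix.toBlocks₁₁, he₁, he₂, hg, hu]
    let _ : Invertible a := ha.invertible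
    obtain ⟨U, V, hU, hV, d, hd, hD⟩ := ih (π ^ k • (g'.toBlocks₂₂ - g'.toBlocks₂₁ * ⅟a * g'.toBlocks₁₂))
    -- block factorization
    have hlu := Matrix.fromBlocks_eq_of_invertible₁₁ a g'.toBlocks₁₂ g'.toBlocks₂₁ g'.toBlocks₂₂
    rw [Matrix.fromBlocks_toBlocks] at hlu
    let U' : Matrix (Unit ⊕ Fin n) (Unit ⊕ Fin n) R :=
      Matrix.fromBlocks 1 0 (g'.toBlocks₂₁ * ⅟a) 1 * Matrix.fromBlocks a 0 0 U
    let V' : Matrix (Unit ⊕ Fin n) (Unit ⊕ Fin n) R :=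
      Matrix.fromBlocks 1 0 0 V * Matrix.fromBlocks 1 (⅟a * g'.toBlocks₁₂) 0 1
    let d' : Unit ⊕ Fin n → R := Sum.elim (fun _ => π ^ k) d
    have hfac : π ^ k • g' = U' * Matrix.diagonal d' * V' := by
      have h1 : Matrix.fromBlocks a 0 0 U * Matrix.diagonal d' * Matrix.fromBlocks 1 0 0 V
          = π ^ k • Matrix.fromBlocks a 0 0 (g'.toBlocks₂₂ - g'.toBlocks₂₁ * ⅟a * g'.toBlocks₁₂) := by
        rw [Matrix.fromBlocks_smul, hD]
        have : Matrix.diagonal d' = Matrix.fromBlocks (Matrix.diagonal fun _ : Unit => π ^ k) 0 0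
            (Matrix.diagonal d) := by
          rw [Matrix.fromBlocks_diagonal]
        rw [this, Matrix.fromBlocks_multiply, Matrix.fromBlocks_multiply]
        have h2 : a * (Matrix.diagonal fun _ : Unit => π ^ k) = π ^ k • a := by
          ext i j
          simp [Matrix.mul_diagonal, mul_comm]
        simp [h2]
      calc π ^ k • g' = Matrix.fromBlocks 1 0 (g'.toBlocks₂₁ * ⅟a) 1 *
            (π ^ k • Matrix.fromBlocks a 0 0 (g'.toBlocks₂₂ - g'.toBlocks₂₁ * ⅟a * g'.toBlocks₁₂)) *
            Matrix.fromBlocks 1 (⅟a * g'.toBlocks₁₂) 0 1 := by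
              rw [Matrix.mul_smul, Matrix.smul_mul, ← hlu]
        _ = _ := by
              rw [← h1]
              simp only [U', V', mul_assoc]
    have hU' : IsUnit U' := by
      rw [Matrix.isUnit_iff_isUnit_det] at hU ha ⊢
      simp only [U', Matrix.det_mul, Matrix.det_fromBlocks_zero₁₂, Matrix.det_one, one_mul]
      exact ha.mul hU
    have hV' : IsUnit V' := by
      rw [Matrix.isUnit_iff_isUnit_det] at hV ⊢
      simp only [V', Matrix.det_mul, Matrix.det_fromBlocks_zero₁₂, Matrix.det_fromBlocks_zero₂₁, Matrix.det_one, one_mul, mul_one]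
      exact hV
    refine ⟨U'.submatrix e₁.symm e₀.symm, V'.submatrix e₀.symm e₂.symm, ?_, ?_, d' ∘ e₀.symm, ?_, ?_⟩
    · exact (Matrix.isUnit_submatrix_equiv _ _).2 hU'
    · exact (Matrix.isUnit_submatrix_equiv _ _).2 hV'
    · intro i
      simp only [Function.comp]
      rcases e₀.symm i with x | x
      · exact Or.inr ⟨k, rfl⟩
      · exact hd x
    · rw [← Matrix.submatrix_diagonal_equiv, Matrix.submatrix_mul_equiv, Matrix.submatrix_mul_equiv, ← hfac, hMg]
      ext i j
      simp [g']


def gsRing (z₀ : ℂ) : Subring (ℂ → ℂ) where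
  carrier := {f | AnalyticAt ℂ f z₀}
  mul_mem' := fun ha hb => AnalyticAt.mul ha hb
  one_mem' := analyticAt_const
  add_mem' := fun ha hb => AnalyticAt.add ha hb
  zero_mem' := analyticAt_const
  neg_mem' := fun ha => AnalyticAt.neg ha

def gsIdeal (z₀ : ℂ) : Ideal (gsRing z₀) where
  carrier := {f | ∀ᶠ z in 𝓝 z₀, f.1 z = 0}
  add_mem' := by
    intro a b ha hb
    filter_upwards [ha, hb] with z h1 h2
    simp [h1, h2]
  zero_mem' := by
    simp
  smul_mem' := by
    intro c x hx
    filter_upwards [hx] with z h1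
    simp [h1]

lemma gsIdeal_mk_eq {z₀ : ℂ} (f g : gsRing z₀) :
    Ideal.Quotient.mk (gsIdeal z₀) f = Ideal.Quotient.mk (gsIdeal z₀) g ↔
      ∀ᶠ z in 𝓝 z₀, f.1 z = g.1 z := by
  rw [Ideal.Quotient.mk_eq_mk_iff_sub_mem]
  change (∀ᶠ z in 𝓝 z₀, (f - g).1 z = 0) ↔ _
  simp [sub_eq_zero]

def gsEval (z₀ z : ℂ) : gsRing z₀ →+* ℂ := (Pi.evalRingHom (fun _ : ℂ => ℂ) z).comp (gsRing z₀).subtype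

lemma gsMat_eq {z₀ : ℂ} {n : ℕ} {M N : Matrix (Fin n) (Fin n) (gsRing z₀)}
    (h : (Ideal.Quotient.mk (gsIdeal z₀)).mapMatrix M = (Ideal.Quotient.mk (gsIdeal z₀)).mapMatrix N) :
    ∀ᶠ z in 𝓝 z₀, (gsEval z₀ z).mapMatrix M = (gsEval z₀ z).mapMatrix N := by
  have h1 : ∀ i j, ∀ᶠ z in 𝓝 z₀, (M i j).1 z = (N i j).1 z := by
    intro i j
    exact (gsIdeal_mk_eq _ _).1 (congrFun (congrFun h i) j)
  have h2 : ∀ᶠ z in 𝓝 z₀, ∀ i j, (M i j).1 z = (N i j).1 z :=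
    eventually_all.2 fun i => eventually_all.2 fun j => h1 i j
  filter_upwards [h2] with z hz
  ext i j
  exact hz i j

lemma gsMat_surj {z₀ : ℂ} {n : ℕ} (M : Matrix (Fin n) (Fin n) (gsRing z₀ ⧸ gsIdeal z₀)) :
    ∃ N, (Ideal.Quotient.mk (gsIdeal z₀)).mapMatrix N = M := by
  choose N hN using fun i j => Ideal.Quotient.mk_surjective (M i j)
  exact ⟨Matrix.of N, by ext i j; exact hN i j⟩

lemma gsMat_unit {z₀ : ℂ} {n : ℕ} {N : Matrix (Fin n) (Fin n) (gsRing z₀)}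
    (h : IsUnit ((Ideal.Quotient.mk (gsIdeal z₀)).mapMatrix N)) :
    ∀ᶠ z in 𝓝 z₀, IsUnit ((gsEval z₀ z).mapMatrix N) := by
  obtain ⟨u, hu⟩ := h
  obtain ⟨N', hN'⟩ := gsMat_surj (↑u⁻¹ : Matrix (Fin n) (Fin n) (gsRing z₀ ⧸ gsIdeal z₀))
  have h1 := gsMat_eq (M := N * N') (N := 1) (by rw [map_mul, hN', ← hu, map_one, Units.mul_inv])
  filter_upwards [h1] with z hz
  rw [map_mul, map_one] at hz
  exact IsUnit.of_mul_eq_one _ hz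

lemma gs_smith_analytic (z₀ : ℂ) (n : ℕ) (m : Fin n → Fin n → ℂ → ℂ)
    (hm : ∀ i j, AnalyticAt ℂ (m i j) z₀) :
    ∃ U V : ℂ → Matrix (Fin n) (Fin n) ℂ,
      (∀ i j, AnalyticAt ℂ (fun z => U z i j) z₀) ∧ (∀ i j, AnalyticAt ℂ (fun z => V z i j) z₀) ∧
      (∀ᶠ z in 𝓝 z₀, IsUnit (U z)) ∧ (∀ᶠ z in 𝓝 z₀, IsUnit (V z)) ∧
      ∃ d : Fin n → ℂ → ℂ, (∀ i, d i = 0 ∨ ∃ k : ℕ, d i = fun z => (z - z₀) ^ k) ∧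
        ∀ᶠ z in 𝓝 z₀, (Matrix.of fun i j => m i j z) = U z * Matrix.diagonal (fun i => d i z) * V z := by
  let q := Ideal.Quotient.mk (gsIdeal z₀)
  let p : gsRing z₀ := ⟨fun z => z - z₀, by
    change AnalyticAt ℂ (fun z => z - z₀) z₀
    fun_prop⟩
  have hπ : ∀ x : gsRing z₀ ⧸ gsIdeal z₀, x = 0 ∨ ∃ (u : gsRing z₀ ⧸ gsIdeal z₀) (k : ℕ),
      IsUnit u ∧ x = (q p) ^ k * u := by
    intro x
    obtain ⟨f, rfl⟩ := Ideal.Quotient.mk_surjective x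
    have hf : AnalyticAt ℂ f.1 z₀ := f.2
    by_cases h : ∀ᶠ z in 𝓝 z₀, f.1 z = 0
    · left
      rw [← map_zero q]
      exact (gsIdeal_mk_eq _ _).2 (by simpa using h)
    · right
      obtain ⟨k, g, hg, hg0, hfg⟩ := hf.exists_eventuallyEq_pow_smul_nonzero_iff.2 h
      refine ⟨q ⟨g, hg⟩, k, ?_, ?_⟩
      · refine IsUnit.of_mul_eq_one (q ⟨g⁻¹, hg.inv hg0⟩) ?_
        rw [← map_mul, ← map_one q]
        refine (gsIdeal_mk_eq _ _).2 ?_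
        filter_upwards [hg.continuousAt.eventually_ne hg0] with z hz
        simp [hz]
      · rw [← map_pow, ← map_mul]
        refine (gsIdeal_mk_eq _ _).2 ?_
        filter_upwards [hfg] with z hz
        simp [hz, p]
  obtain ⟨U, V, hU, hV, d, hd, hM⟩ := gs_smith_sum (q p) hπ n
    (q.mapMatrix (Matrix.of fun i j => (⟨m i j, hm i j⟩ : gsRing z₀)))
  obtain ⟨U, rfl⟩ := gsMat_surj U
  obtain ⟨V, rfl⟩ := gsMat_surj V
  have hd' : ∀ i, ∃ f : gsRing z₀, q f = d i ∧ (f.1 = 0 ∨ ∃ k : ℕ, f.1 = fun z => (z - z₀) ^ k) := by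
    intro i
    rcases hd i with h | ⟨k, h⟩
    · exact ⟨0, by simp [h], Or.inl rfl⟩
    · exact ⟨p ^ k, by simp [h], Or.inr ⟨k, rfl⟩⟩
  choose f hf hf' using hd'
  refine ⟨fun z => (gsEval z₀ z).mapMatrix U, fun z => (gsEval z₀ z).mapMatrix V,
    fun i j => (U i j).2, fun i j => (V i j).2, gsMat_unit hU, gsMat_unit hV,
    fun i => (f i).1, hf', ?_⟩
  have h1 := gsMat_eq (M := (Matrix.of fun i j => (⟨m i j, hm i j⟩ : gsRing z₀)))
    (N := U * Matrix.diagonal f * V) (by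
      rw [map_mul, map_mul]
      change q.mapMatrix _ = _
      rw [hM]
      congr 2
      ext i j
      by_cases hij : i = j
      · subst hij; simp [← hf, q]
      · simp [hij])
  filter_upwards [h1] with z hz
  rw [map_mul, map_mul] at hz
  have h3 : (Matrix.diagonal fun i => (f i).1 z) = (gsEval z₀ z).mapMatrix (Matrix.diagonal f) := by
    ext i j
    by_cases hij : i = j
    · subst hij; simp [gsEval]
    · simp [hij]
  rw [h3, ← hz]
  rfl

lemma gs_isUnit_of_injective {X : Type*} [NormedAddCommGroup X] [NormedSpace ℂ X] [CompleteSpace X]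
    {K : X →L[ℂ] X} (hK : IsCompactOperator K) (h : Function.Injective ((1 + K : X →L[ℂ] X) : X → X)) : IsUnit (1 + K) := by
  rcases hK.hasEigenvalue_or_mem_resolventSet (μ := -1) (by simp) with h1 | h1
  · obtain ⟨v, hv⟩ := h1.exists_hasEigenvector
    exfalso
    apply hv.2
    have h2 := hv.apply_eq_smul
    apply h
    simp at h2
    simp [h2]
  · rw [spectrum.mem_resolventSet_iff, ← IsUnit.neg_iff] at h1
    convert h1 using 1
    simp [add_comm]

lemma gs_ker_fd {X : Type*} [NormedAddCommGroup X] [NormedSpace ℂ X]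
    {K : X →L[ℂ] X} (hK : IsCompactOperator K) : FiniteDimensional ℂ (1 + K).ker := by
  have h1 : IsCompactOperator (-(K ∘L (1 + K).ker.subtypeL)) :=
    (hK.comp_clm _).neg
  have h2 : ∀ x : (1 + K).ker, (-(K ∘L (1 + K).ker.subtypeL)) x = x.1 := by
    intro x
    have := x.2
    simp at this
    simp
    exact (eq_neg_of_add_eq_zero_left this).symm
  have h3 := h1.codRestrict (V := (1 + K).ker) (fun x => by rw [h2]; exact x.2) (ContinuousLinearMap.isClosed_ker _)
  apply FiniteDimensional.of_isCompactOperator_id (𝕜 := ℂ)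
  have h4 : (id : (1 + K).ker → (1 + K).ker) = Set.codRestrict (-(K ∘L (1 + K).ker.subtypeL))
      ((1 + K).ker : Set X) (fun x => by rw [h2]; exact x.2) := by
    funext x
    exact Subtype.ext (h2 x).symm
  rw [h4]
  exact h3

lemma gs_isUnit_of_surjective {X : Type*} [NormedAddCommGroup X] [NormedSpace ℂ X] [CompleteSpace X]
    {K : X →L[ℂ] X} (hK : IsCompactOperator K) (h : Function.Surjective ((1 + K : X →L[ℂ] X) : X → X)) : IsUnit (1 + K) := by
  have := gs_ker_fd hK
  obtain ⟨Q, hQ⟩ := Submodule.ClosedComplemented.of_finiteDimensional (𝕜 := ℂ) (1 + K).ker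
  let T := (1 + K) ∘L Q.ker.subtypeL
  have := (ContinuousLinearMap.isClosed_ker Q).completeSpace_coe
  have hTi : T.ker = ⊥ := by
    rw [LinearMap.ker_eq_bot']
    intro x hx
    have hx1 : x.1 ∈ (1 + K).ker := hx
    have := hQ ⟨x.1, hx1⟩
    have hx2 : Q x.1 = 0 := x.2
    rw [hx2] at this
    ext
    exact (congrArg Subtype.val this).symm
  have hTs : T.range = ⊤ := by
    rw [LinearMap.range_eq_top]
    intro y
    obtain ⟨x, hx⟩ := h y
    refine ⟨⟨x - (Q x).1, ?_⟩, ?_⟩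
    · rw [LinearMap.mem_ker]
      change Q (x - (Q x).1) = 0
      rw [map_sub, hQ, sub_self]
    · change (1 + K) (x - (Q x).1) = y
      have := (Q x).2
      rw [LinearMap.mem_ker] at this
      rw [map_sub, hx]
      erw [this]
      simp
  let e := ContinuousLinearEquiv.ofBijective T hTi hTs
  let S : X →L[ℂ] X := Q.ker.subtypeL ∘L (e.symm : X →L[ℂ] Q.ker)
  have hS : (1 + K) * S = 1 := by
    ext y
    exact ContinuousLinearEquiv.ofBijective_apply_symm_apply T hTi hTs y
  have hS2 : S = 1 + (-(K ∘L S)) := by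
    have : S + K * S = 1 := by rw [← hS, add_mul, one_mul]
    rw [← this]
    change S = S + K * S + -(K * S)
    abel
  have hSu : IsUnit S := by
    rw [hS2]
    apply gs_isUnit_of_injective
    · exact (hK.comp_clm _).neg
    · rw [← hS2]
      intro x y hxy
      have := congrArg (fun t => (1 + K : X →L[ℂ] X) t) hxy
      change ((1 + K) * S) x = ((1 + K) * S) y at this
      simpa [hS] using this
  obtain ⟨u, hu⟩ := hSu
  rw [← hu] at hS
  have : (1 + K) = ((u⁻¹ : (X →L[ℂ] X)ˣ) : X →L[ℂ] X) := by
    calc (1 + K) = (1 + K) * (u * ((u⁻¹ : (X →L[ℂ] X)ˣ) : X →L[ℂ] X)) := by simp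
      _ = _ := by rw [← mul_assoc, hS, one_mul]
  rw [this]
  exact Units.isUnit _

lemma gs_fred {X : Type*} [NormedAddCommGroup X] [NormedSpace ℂ X] [CompleteSpace X]
    {K : X →L[ℂ] X} (hK : IsCompactOperator K) :
    ∃ (n : ℕ) (φ : (Fin n → ℂ) →L[ℂ] X) (ψ : X →L[ℂ] (Fin n → ℂ)) (L : (Fin n → ℂ) →L[ℂ] X),
      ψ ∘L φ = 1 ∧ (1 + K) ∘L φ = 0 ∧ IsUnit (1 + K + L ∘L ψ) := by
  have hfd := gs_ker_fd hK
  set A : X →L[ℂ] X := 1 + K with hA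
  obtain ⟨Q, hQ⟩ := Submodule.ClosedComplemented.of_finiteDimensional (𝕜 := ℂ) A.ker
  obtain ⟨L, hL⟩ : ∃ L : A.ker →ₗ[ℂ] X, (Function.Injective (A.range.mkQ ∘ₗ L)) ∨
      (Function.Surjective (A.range.mkQ ∘ₗ L)) := by
    obtain ⟨σ, hσ⟩ := A.range.mkQ.exists_rightInverse_of_surjective A.range.range_mkQ
    suffices ∃ g : A.ker →ₗ[ℂ] (X ⧸ A.range), Function.Injective g ∨ Function.Surjective g by
      obtain ⟨g, hg⟩ := this
      refine ⟨σ ∘ₗ g, ?_⟩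
      rwa [← LinearMap.comp_assoc, hσ, LinearMap.id_comp]
    rcases le_total (Module.rank ℂ A.ker) (Module.rank ℂ (X ⧸ A.range)) with h | h
    · obtain ⟨g, hg⟩ := rank_le_iff_exists_linearMap.1 h
      exact ⟨g, Or.inl hg⟩
    · obtain ⟨g, hg⟩ := rank_le_iff_exists_linearMap.1 h
      obtain ⟨g', hg'⟩ := g.exists_leftInverse_of_injective (LinearMap.ker_eq_bot.2 hg)
      refine ⟨g', Or.inr fun y => ⟨g y, ?_⟩⟩
      exact congrArg (fun t => t y) hg'
  let LC : A.ker →L[ℂ] X := LinearMap.toContinuousLinearMap L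
  have hu : IsUnit (A + LC ∘L Q) := by
    have hc : IsCompactOperator (K + LC ∘L Q) := by
      refine hK.add ?_
      have : ProperSpace A.ker := FiniteDimensional.proper ℂ _
      have : IsCompactOperator LC := isCompactOperator_of_locallyCompactSpace_rng LC
      exact this.comp_clm Q
    have he : A + LC ∘L Q = 1 + (K + LC ∘L Q) := add_assoc _ _ _
    rcases hL with h | h
    · rw [he]
      apply gs_isUnit_of_injective hc
      rw [← he]
      rw [injective_iff_map_eq_zero]
      intro x hx
      have hx' : A x + L (Q x) = 0 := hx
      have h1 : Q x = 0 := by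
        apply h
        rw [map_zero]
        change A.range.mkQ (L (Q x)) = 0
        rw [Submodule.mkQ_apply, Submodule.Quotient.mk_eq_zero]
        exact ⟨-x, by rw [map_neg]; exact (eq_neg_of_add_eq_zero_right hx').symm⟩
      rw [h1, map_zero, add_zero] at hx'
      have := hQ ⟨x, hx'⟩
      rw [h1] at this
      exact (congrArg Subtype.val this).symm
    · rw [he]
      apply gs_isUnit_of_surjective hc
      rw [← he]
      intro y
      obtain ⟨w, hw⟩ := h (A.range.mkQ y)
      have h1 : y - L w ∈ A.range := by
        rw [← Submodule.Quotient.mk_eq_zero, Submodule.Quotient.mk_sub, sub_eq_zero]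
        exact hw.symm
      obtain ⟨x, hx⟩ := h1
      have hx' : A x = y - L w := hx
      refine ⟨x - (Q x).1 + w.1, ?_⟩
      change A _ + L (Q _) = y
      have h2 : Q (x - (Q x).1 + w.1) = w := by simp [hQ]
      have h3 : ∀ t : A.ker, A t.1 = 0 := fun t => t.2
      rw [h2, map_add, map_sub, h3, h3, hx']
      abel
  let e : A.ker ≃L[ℂ] (Fin (Module.finrank ℂ A.ker) → ℂ) :=
    (Module.finBasis ℂ A.ker).equivFunL
  refine ⟨_, A.ker.subtypeL ∘L (e.symm : (Fin (Module.finrank ℂ A.ker) → ℂ) →L[ℂ] A.ker), (e : A.ker →L[ℂ] (Fin (Module.finrank ℂ A.ker) → ℂ)) ∘L Q,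
    LC ∘L (e.symm : (Fin (Module.finrank ℂ A.ker) → ℂ) →L[ℂ] A.ker), ?_, ?_, ?_⟩
  · ext1 x
    simp [hQ]
  · ext1 x
    exact (e.symm x).2
  · convert hu using 2
    ext x
    simp

section
variable {X : Type*} [NormedAddCommGroup X] [NormedSpace ℂ X] {n : ℕ}
  (φ : (Fin n → ℂ) →L[ℂ] X) (ψ : X →L[ℂ] (Fin n → ℂ))

noncomputable def gsC (n : ℕ) : Matrix (Fin n) (Fin n) ℂ ≃ₐ[ℂ] ((Fin n → ℂ) →L[ℂ] (Fin n → ℂ)) :=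
  (Matrix.toLinAlgEquiv').trans (Module.End.toContinuousLinearMap (𝕜 := ℂ) (Fin n → ℂ))

noncomputable def gsPhi (N : Matrix (Fin n) (Fin n) ℂ) : X →L[ℂ] X := 1 - φ ∘L ψ + φ ∘L (gsC n N) ∘L ψ

lemma gsC_apply (N : Matrix (Fin n) (Fin n) ℂ) (x) : gsC n N x = N.mulVec x := rfl

variable {φ ψ}

lemma gs_psi_phi (h : ψ ∘L φ = 1) (x) : ψ (φ x) = x := congrArg (fun t => t x) h

lemma gsPhi_one : gsPhi φ ψ 1 = 1 := by
  ext x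
  simp [gsPhi]

lemma gsPhi_mul (h : ψ ∘L φ = 1) (N N') : gsPhi φ ψ (N * N') = gsPhi φ ψ N * gsPhi φ ψ N' := by
  have := gs_psi_phi h
  ext x
  simp [gsPhi, this]

lemma gsPhi_unit (h : ψ ∘L φ = 1) {N} (hN : IsUnit N) : IsUnit (gsPhi φ ψ N) := by
  let f : Matrix (Fin n) (Fin n) ℂ →* (X →L[ℂ] X) := ⟨⟨gsPhi φ ψ, gsPhi_one⟩, gsPhi_mul h⟩
  exact hN.map f

lemma gsPhi_unit_iff (h : ψ ∘L φ = 1) {N} : IsUnit (gsPhi φ ψ N) ↔ IsUnit N := by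
  refine ⟨fun hu => ?_, gsPhi_unit h⟩
  obtain ⟨u, hu⟩ := hu
  rw [← Matrix.mulVec_injective_iff_isUnit]
  intro x y hxy
  have h0 := gs_psi_phi h
  have h1 : ∀ x, gsPhi φ ψ N (φ x) = φ (N.mulVec x) := by
    intro x
    simp [gsPhi, h0, gsC_apply]
  have h2 : gsPhi φ ψ N (φ x) = gsPhi φ ψ N (φ y) := by rw [h1, h1, hxy]
  rw [← hu] at h2
  have h3 := congrArg (fun t => (((u⁻¹ : (X →L[ℂ] X)ˣ) : X →L[ℂ] X)) t) h2
  have h4 : ∀ w, (((u⁻¹ : (X →L[ℂ] X)ˣ) : X →L[ℂ] X)) ((u : X →L[ℂ] X) w) = w := fun w =>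
    congrArg (fun t : X →L[ℂ] X => t w) u.inv_mul
  simp only [h4] at h3
  rw [← h0 x, ← h0 y, h3]
end

lemma gsPhi_analytic {X : Type*} [NormedAddCommGroup X] [NormedSpace ℂ X] {n : ℕ}
    (φ : (Fin n → ℂ) →L[ℂ] X) (ψ : X →L[ℂ] (Fin n → ℂ)) {z₀ : ℂ} {U : ℂ → Matrix (Fin n) (Fin n) ℂ}
    (hU : ∀ i j, AnalyticAt ℂ (fun z => U z i j) z₀) : AnalyticAt ℂ (fun z => gsPhi φ ψ (U z)) z₀ := by
  have : (fun z => gsPhi φ ψ (U z)) = fun z => (1 - φ ∘L ψ) +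
      ∑ i, ∑ j, U z i j • (φ ∘L (gsC n (Matrix.single i j 1)) ∘L ψ) := by
    funext z
    rw [gsPhi]
    congr 1
    conv_lhs => rw [Matrix.matrix_eq_sum_single (U z)]
    ext x
    simp only [map_sum, ContinuousLinearMap.comp_apply, _root_.sum_apply, _root_.smul_apply]
    refine Finset.sum_congr rfl fun i _ => Finset.sum_congr rfl fun j _ => ?_
    rw [← map_smul, ← _root_.smul_apply, ← map_smul, Matrix.smul_single, smul_eq_mul, mul_one]
  rw [this]
  refine analyticAt_const.add ?_
  refine Finset.analyticAt_fun_sum _ fun i _ => Finset.analyticAt_fun_sum _ fun j _ => ?_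
  exact (hU i j).smul analyticAt_const

lemma gs_local {X : Type*} [NormedAddCommGroup X] [NormedSpace ℂ X] [CompleteSpace X]
    (A : ℂ → (X →L[ℂ] X)) (z₀ : ℂ) (hA : AnalyticAt ℂ A z₀)
    (hK : IsCompactOperator (A z₀ - 1 : X →L[ℂ] X)) :
    ∃ (n : ℕ) (φ : (Fin n → ℂ) →L[ℂ] X) (ψ : X →L[ℂ] (Fin n → ℂ)) (W₁ W₂ : ℂ → (X →L[ℂ] X))
      (d : Fin n → ℂ → ℂ),
      ψ ∘L φ = 1 ∧ AnalyticAt ℂ W₁ z₀ ∧ AnalyticAt ℂ W₂ z₀ ∧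
      (∀ᶠ z in 𝓝 z₀, IsUnit (W₁ z)) ∧ (∀ᶠ z in 𝓝 z₀, IsUnit (W₂ z)) ∧
      (∀ i, d i = 0 ∨ ∃ k : ℕ, 0 < k ∧ d i = fun z => (z - z₀) ^ k) ∧
      ∀ᶠ z in 𝓝 z₀, A z = W₁ z * gsPhi φ ψ (Matrix.diagonal fun i => d i z) * W₂ z := by
  obtain ⟨n, φ, ψ, L, h1, h2, h3⟩ := gs_fred hK
  have hA1 : 1 + (A z₀ - 1) = A z₀ := by abel
  rw [hA1] at h2 h3
  have h0 := gs_psi_phi h1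
  let B : ℂ → (X →L[ℂ] X) := fun z => A z + L ∘L ψ
  have hB : AnalyticAt ℂ B z₀ := hA.add analyticAt_const
  have hBu : ∀ᶠ z in 𝓝 z₀, IsUnit (B z) :=
    hB.continuousAt.eventually (Units.isOpen.mem_nhds h3)
  let H : ℂ → ((Fin n → ℂ) →L[ℂ] X) := fun z => (Ring.inverse (B z)) ∘L L
  have hBi : AnalyticAt ℂ (fun z => Ring.inverse (B z)) z₀ := by
    refine AnalyticAt.fun_comp (g := Ring.inverse) ?_ hB
    obtain ⟨u, hu⟩ := h3
    change AnalyticAt ℂ _ (A z₀ + L ∘L ψ)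
    rw [← hu]
    exact analyticAt_inverse u
  have hHz : H z₀ = φ := by
    ext1 x
    have : B z₀ (φ x) = L x := by
      have e1 : A z₀ (φ x) = 0 := congrArg (fun t => t x) h2
      simp [B, h0, e1]
    change Ring.inverse (B z₀) (L x) = φ x
    rw [← this]
    exact congrArg (fun t : X →L[ℂ] X => t (φ x)) (Ring.inverse_mul_cancel _ h3)
  let m : Fin n → Fin n → ℂ → ℂ := fun i j z => (1 : Matrix (Fin n) (Fin n) ℂ) i j - ψ (H z (Pi.single j 1)) i
  have hm : ∀ i j, AnalyticAt ℂ (m i j) z₀ := by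
    intro i j
    refine analyticAt_const.sub ?_
    let T : (X →L[ℂ] X) →L[ℂ] ℂ :=
      ((ContinuousLinearMap.proj i : (Fin n → ℂ) →L[ℂ] ℂ) ∘L ψ) ∘L
        (ContinuousLinearMap.apply ℂ X (L (Pi.single j 1)))
    exact (T.analyticAt _).fun_comp hBi
  have hmC : ∀ z, gsC n (Matrix.of fun i j => m i j z) = 1 - ψ ∘L H z := by
    intro z
    have : (Matrix.of fun i j => m i j z) = (gsC n).symm (1 - ψ ∘L H z) := by
      rw [map_sub, map_one]
      ext i j
      simp only [Matrix.of_apply, Matrix.sub_apply, m]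
      congr 1
    rw [this, AlgEquiv.apply_symm_apply]
  obtain ⟨U, V, hU, hV, hUu, hVu, d, hd, hUV⟩ := gs_smith_analytic z₀ n m hm
  let Wc : ℂ → (X →L[ℂ] X) := fun z => 1 - (1 - φ ∘L ψ) ∘L H z ∘L ψ
  have hWc : AnalyticAt ℂ Wc z₀ := by
    let T : (X →L[ℂ] X) →L[ℂ] (X →L[ℂ] X) :=
      ContinuousLinearMap.mul ℂ (X →L[ℂ] X) (1 - φ ∘L ψ) ∘L
        ((ContinuousLinearMap.mul ℂ (X →L[ℂ] X)).flip (L ∘L ψ))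
    exact analyticAt_const.sub ((T.analyticAt _).fun_comp hBi)
  have hWu : ∀ z, IsUnit (Wc z) := by
    intro z
    refine ⟨⟨Wc z, 1 + (1 - φ ∘L ψ) ∘L H z ∘L ψ, ?_, ?_⟩, rfl⟩ <;>
    · ext x
      simp [Wc, h0]
  refine ⟨n, φ, ψ, fun z => B z * gsPhi φ ψ (U z), fun z => gsPhi φ ψ (V z) * Wc z, d, h1, ?_, ?_, ?_, ?_, ?_, ?_⟩
  · exact hB.mul (gsPhi_analytic φ ψ hU)
  · exact (gsPhi_analytic φ ψ hV).mul hWc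
  · filter_upwards [hBu, hUu] with z ha hb using ha.mul (gsPhi_unit h1 hb)
  · filter_upwards [hVu] with z hb using (gsPhi_unit h1 hb).mul (hWu z)
  · intro i
    rcases hd i with h | ⟨k, h⟩
    · exact Or.inl h
    · refine Or.inr ⟨k, ?_, h⟩
      have e1 := hUV.self_of_nhds
      have e2 : (Matrix.of fun i j => m i j z₀) = 0 := by
        apply (gsC n).injective
        rw [hmC, hHz, h1, sub_self, map_zero]
      rw [e2] at e1
      have e3 : Matrix.diagonal (fun i => d i z₀) = 0 := by
        have := e1.symm
        rw [hVu.self_of_nhds.mul_left_eq_zero, hUu.self_of_nhds.mul_right_eq_zero] at this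
        exact this
      have e4 : d i z₀ = 0 := by
        have := congrFun (congrFun e3 i) i
        simpa using this
      rw [h] at e4
      by_contra hk
      have : k = 0 := by omega
      simp [this] at e4
  · filter_upwards [hBu, hUV] with z hz hz2
    have e1 : A z = B z * (gsPhi φ ψ (Matrix.of fun i j => m i j z) * Wc z) := by
      have e2 : B z * (1 - H z ∘L ψ) = A z := by
        have : B z * (H z ∘L ψ) = L ∘L ψ := by
          change B z * (Ring.inverse (B z) * (L ∘L ψ)) = _
          rw [← mul_assoc, Ring.mul_inverse_cancel _ hz, one_mul]
        rw [mul_sub, this, mul_one]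
        simp [B]
      rw [← e2]
      congr 1
      rw [gsPhi, hmC]
      ext x
      simp [Wc, h0]
      abel
    rw [e1, hz2, gsPhi_mul h1, gsPhi_mul h1]
    simp only [mul_assoc]

lemma gs_singular {X : Type*} [NormedAddCommGroup X] [NormedSpace ℂ X]
    {n : ℕ} {φ : (Fin n → ℂ) →L[ℂ] X} {ψ : X →L[ℂ] (Fin n → ℂ)} (h : ψ ∘L φ = 1)
    {A W₁ W₂ : X →L[ℂ] X} (h1 : IsUnit W₁) (h2 : IsUnit W₂) {c : Fin n → ℂ}
    (hA : A = W₁ * gsPhi φ ψ (Matrix.diagonal c) * W₂) : IsUnit A ↔ ∀ i, c i ≠ 0 := by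
  have : IsUnit A ↔ IsUnit (gsPhi φ ψ (Matrix.diagonal c)) := by
    obtain ⟨u, rfl⟩ := h1
    obtain ⟨v, rfl⟩ := h2
    rw [hA, Units.isUnit_mul_units, Units.isUnit_units_mul]
  rw [this, gsPhi_unit_iff h, Matrix.isUnit_iff_isUnit_det, Matrix.det_diagonal, isUnit_iff_ne_zero,
    Finset.prod_ne_zero_iff]
  simp

lemma gs_alt {X : Type*} [NormedAddCommGroup X] [NormedSpace ℂ X] [CompleteSpace X]
    (A : ℂ → (X →L[ℂ] X)) (z₀ : ℂ) (hA : AnalyticAt ℂ A z₀)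
    (hK : IsCompactOperator (A z₀ - 1 : X →L[ℂ] X)) :
    (∀ᶠ w in 𝓝 z₀, ¬ IsUnit (A w)) ∨ (∀ᶠ w in 𝓝[≠] z₀, IsUnit (A w)) := by
  obtain ⟨n, φ, ψ, W₁, W₂, d, h, -, -, h1, h2, hd, hf⟩ := gs_local A z₀ hA hK
  by_cases hc : ∃ i, d i = 0
  · left
    obtain ⟨i, hi⟩ := hc
    filter_upwards [h1, h2, hf] with z h1 h2 hf
    rw [gs_singular h h1 h2 hf]
    intro hh
    exact hh i (by simp [hi])
  · right
    push Not at hc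
    filter_upwards [nhdsWithin_le_nhds h1, nhdsWithin_le_nhds h2, nhdsWithin_le_nhds hf,
      self_mem_nhdsWithin] with z h1 h2 hf hz
    rw [gs_singular h h1 h2 hf]
    intro i
    rcases hd i with hi | ⟨k, -, hi⟩
    · exact absurd hi (hc i)
    · rw [hi]
      exact pow_ne_zero _ (sub_ne_zero.2 hz)

lemma gs_generic {X : Type*} [NormedAddCommGroup X] [NormedSpace ℂ X] [CompleteSpace X]
    (A : ℂ → (X →L[ℂ] X)) (S : Set ℂ) (hS : IsPreconnected S)
    (hA : ∀ z ∈ S, AnalyticAt ℂ A z)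
    (hK : ∀ z ∈ S, IsCompactOperator (A z - 1 : X →L[ℂ] X))
    (hinv : ∃ z ∈ S, IsUnit (A z)) (z₀ : ℂ) (hz₀ : z₀ ∈ S) :
    ¬ (∀ᶠ w in 𝓝 z₀, ¬ IsUnit (A w)) := by
  intro hcon
  obtain ⟨z₁, hz₁, hu₁⟩ := hinv
  have ho1 : IsOpen {z | ∀ᶠ w in 𝓝 z, ¬ IsUnit (A w)} := isOpen_setOf_eventually_nhds
  have ho2 : IsOpen {z | ∀ᶠ w in 𝓝[≠] z, IsUnit (A w)} := by
    rw [isOpen_iff_mem_nhds]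
    intro z hz
    have hz' : ∀ᶠ w in 𝓝[≠] z, IsUnit (A w) := hz
    have h1 := eventually_eventually_nhdsWithin.2 hz'
    rw [eventually_nhdsWithin_iff] at h1
    filter_upwards [h1] with y hy
    by_cases hyz : y = z
    · rw [hyz]; exact hz
    · have h2 := hy hyz
      rw [isOpen_compl_singleton.nhdsWithin_eq hyz] at h2
      exact nhdsWithin_le_nhds h2
  obtain ⟨z, -, hz1, hz2⟩ := hS _ _ ho1 ho2 (fun z hz => gs_alt A z (hA z hz) (hK z hz))
    ⟨z₀, hz₀, hcon⟩ ⟨z₁, hz₁, nhdsWithin_le_nhds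
      ((hA z₁ hz₁).continuousAt.eventually (Units.isOpen.mem_nhds hu₁))⟩
  have h3 : ∀ᶠ w in 𝓝[≠] z, False := by
    filter_upwards [nhdsWithin_le_nhds hz1, hz2] with w ha hb using ha hb
  simp at h3
  exact (inferInstance : (𝓝[≠] z).NeBot).ne h3

/-- Gohberg–Sigal factorisation. Let `A(z) = I + K(z)` with
`K : Σ → B(X)` analytic and compact-valued on an open connected set `Σ ⊆ ℂ`, and suppose
`A` is invertible at some point of `Σ`. Then near every `z₀ ∈ Σ` one may factor
`A(z) = W₁(z)(P₀ + Σⱼ (z − z₀)^{lⱼ} Pⱼ)W₂(z)` with `W₁, W₂` analytic and invertible,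
`P₀, …, P_M` mutually disjoint projections summing to the identity with `rank Pⱼ = 1`
for `1 ≤ j ≤ M`, and positive integers `l₁, …, l_M`. -/
theorem gohberg_sigal_factorisation
    {X : Type*} [NormedAddCommGroup X] [NormedSpace ℂ X] [CompleteSpace X]
    (S : Set ℂ) (hSopen : IsOpen S) (hSconn : IsConnected S)
    (K : ℂ → (X →L[ℂ] X)) (A : ℂ → (X →L[ℂ] X))
    (hA : ∀ z, A z = 1 + K z)
    (hKanal : DifferentiableOn ℂ K S)
    (hKcpt : ∀ z ∈ S, IsCompactOperator (K z))
    (hAinv : ∃ z ∈ S, IsUnit (A z))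
    (z₀ : ℂ) (hz₀ : z₀ ∈ S) :
    ∃ (V : Set ℂ), IsOpen V ∧ z₀ ∈ V ∧ V ⊆ S ∧
    ∃ (W₁ W₂ : ℂ → (X →L[ℂ] X)),
      DifferentiableOn ℂ W₁ V ∧ DifferentiableOn ℂ W₂ V ∧
      (∀ z ∈ V, IsUnit (W₁ z)) ∧ (∀ z ∈ V, IsUnit (W₂ z)) ∧
    ∃ (M : ℕ) (P : ℕ → (X →L[ℂ] X)) (l : ℕ → ℕ),
      (∀ j ≤ M, IsIdempotentElem (P j)) ∧
      (∀ i ≤ M, ∀ j ≤ M, i ≠ j → (P i) ∘L (P j) = 0) ∧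
      (∀ j, 1 ≤ j → j ≤ M → Module.rank ℂ (LinearMap.range ((P j) : X →ₗ[ℂ] X)) = 1) ∧
      (∑ j ∈ Finset.range (M + 1), P j) = 1 ∧
      (∀ j, 1 ≤ j → j ≤ M → 0 < l j) ∧
      (∀ z ∈ V, A z =
        W₁ z ∘L (P 0 + ∑ j ∈ Finset.Icc 1 M, (z - z₀) ^ (l j) • P j) ∘L W₂ z) := by
  have hAK : ∀ z, A z - 1 = K z := fun z => by rw [hA]; abel
  have hAan : ∀ z ∈ S, AnalyticAt ℂ A z := by
    intro z hz
    have h1 : A = fun z => 1 + K z := funext hA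
    rw [h1]
    exact analyticAt_const.add (hKanal.analyticAt (hSopen.mem_nhds hz))
  have hcpt : ∀ z ∈ S, IsCompactOperator (A z - 1 : X →L[ℂ] X) := by
    intro z hz
    rw [hAK]
    exact hKcpt z hz
  have hgen := gs_generic A S hSconn.isPreconnected hAan hcpt hAinv z₀ hz₀
  obtain ⟨n, φ, ψ, W₁, W₂, d, h, ha1, ha2, h1, h2, hd, hf⟩ := gs_local A z₀ (hAan z₀ hz₀) (hcpt z₀ hz₀)
  have hd' : ∀ i, ∃ k : ℕ, 0 < k ∧ d i = fun z => (z - z₀) ^ k := by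
    intro i
    rcases hd i with hi | hi
    · exfalso
      apply hgen
      filter_upwards [h1, h2, hf] with z h1 h2 hf
      rw [gs_singular h h1 h2 hf]
      intro hh
      exact hh i (by simp [hi])
    · exact hi
  choose k hk hdk using hd'
  have h0 := gs_psi_phi h
  have hev : ∀ᶠ z in 𝓝 z₀, z ∈ S ∧ DifferentiableAt ℂ W₁ z ∧ DifferentiableAt ℂ W₂ z ∧
      IsUnit (W₁ z) ∧ IsUnit (W₂ z) ∧
      A z = W₁ z * gsPhi φ ψ (Matrix.diagonal fun i => d i z) * W₂ z := by
    filter_upwards [hSopen.mem_nhds hz₀, ha1.eventually_analyticAt, ha2.eventually_analyticAt,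
      h1, h2, hf] with z a b c e f g
    exact ⟨a, b.differentiableAt, c.differentiableAt, e, f, g⟩
  obtain ⟨V, hV, hVo, hzV⟩ := eventually_nhds_iff.1 hev
  let p : Fin n → (X →L[ℂ] X) := fun i =>
    ((ContinuousLinearMap.proj i : (Fin n → ℂ) →L[ℂ] ℂ) ∘L ψ).smulRight (φ (Pi.single i 1))
  have hp : ∀ i x, p i x = ψ x i • φ (Pi.single i 1) := fun i x => rfl
  have hpp : ∀ i j, p i * p j = if i = j then p i else 0 := by
    intro i j
    ext x
    change p i (p j x) = _
    rw [hp, hp, map_smul, h0]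
    split_ifs with hij
    · subst hij
      simp [hp]
    · simp [hij]
  have hsum : ∀ c : Fin n → ℂ, ∑ i, c i • p i = φ ∘L gsC n (Matrix.diagonal c) ∘L ψ := by
    intro c
    ext x
    rw [_root_.sum_apply]
    change ∑ i, (c i • p i) x = φ ((Matrix.diagonal c).mulVec (ψ x))
    rw [← Finset.univ_sum_single ((Matrix.diagonal c).mulVec (ψ x)), map_sum]
    refine Finset.sum_congr rfl fun i _ => ?_
    rw [_root_.smul_apply, hp, smul_smul, ← map_smul, ← Pi.single_smul]
    simp [Matrix.mulVec_diagonal]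
  have hsum1 : ∑ i, p i = φ ∘L ψ := by
    have := hsum 1
    simp only [Pi.one_apply, one_smul] at this
    rw [this]
    ext x
    have h5 : Matrix.diagonal (1 : Fin n → ℂ) = 1 := Matrix.diagonal_one
    rw [h5, map_one]
    rfl
  let P : ℕ → (X →L[ℂ] X) := fun j => Nat.casesOn j (1 - φ ∘L ψ)
    (fun i => if hi : i < n then p ⟨i, hi⟩ else 0)
  have hP0 : P 0 = 1 - φ ∘L ψ := rfl
  have hPs : ∀ i : Fin n, P (i + 1) = p i := by
    intro i
    simp [P]
  let l : ℕ → ℕ := fun j => if hi : j - 1 < n then k ⟨j - 1, hi⟩ else 0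
  have hl : ∀ i : Fin n, l (i + 1) = k i := by
    intro i
    simp [l]
  have hcase : ∀ j ≤ n, j = 0 ∨ ∃ i : Fin n, j = i + 1 := by
    intro j hj
    rcases j with _ | j
    · exact Or.inl rfl
    · exact Or.inr ⟨⟨j, by omega⟩, rfl⟩
  have h0p : ∀ i, (1 - φ ∘L ψ) * p i = 0 := by
    intro i
    ext x
    change p i x - φ (ψ (p i x)) = 0
    rw [hp, map_smul, h0, map_smul, sub_self]
  have hp0 : ∀ i, p i * (1 - φ ∘L ψ) = 0 := by
    intro i
    ext x
    change p i (x - φ (ψ x)) = 0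
    rw [hp, map_sub, h0, sub_self]
    simp
  have h00 : (1 - φ ∘L ψ) * (1 - φ ∘L ψ) = 1 - φ ∘L ψ := by
    ext x
    simp [h0]
  refine ⟨V, hVo, hzV, fun z hz => (hV z hz).1, W₁, W₂,
    fun z hz => (hV z hz).2.1.differentiableWithinAt,
    fun z hz => (hV z hz).2.2.1.differentiableWithinAt,
    fun z hz => (hV z hz).2.2.2.1, fun z hz => (hV z hz).2.2.2.2.1, n, P, l, ?_, ?_, ?_, ?_, ?_, ?_⟩
  · intro j hj
    rcases hcase j hj with rfl | ⟨i, rfl⟩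
    · exact h00
    · rw [hPs]
      change p i * p i = p i
      rw [hpp, if_pos rfl]
  · intro i hi j hj hij
    change P i * P j = 0
    rcases hcase i hi with rfl | ⟨i, rfl⟩ <;> rcases hcase j hj with rfl | ⟨j, rfl⟩
    · exact absurd rfl hij
    · rw [hPs, hP0]; exact h0p j
    · rw [hPs, hP0]; exact hp0 i
    · rw [hPs, hPs, hpp, if_neg]
      rintro rfl
      exact hij rfl
  · intro j hj hjn
    rcases hcase j hjn with rfl | ⟨i, rfl⟩
    · omega
    · rw [hPs]
      have hne : φ (Pi.single i 1) ≠ 0 := by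
        intro hh
        have := h0 (Pi.single i 1)
        rw [hh, map_zero] at this
        have := congrFun this i
        simp at this
      have hr : LinearMap.range ((p i) : X →ₗ[ℂ] X) = Submodule.span ℂ {φ (Pi.single i 1)} := by
        ext y
        rw [Submodule.mem_span_singleton, LinearMap.mem_range]
        constructor
        · rintro ⟨x, rfl⟩
          exact ⟨ψ x i, rfl⟩
        · rintro ⟨c, rfl⟩
          refine ⟨c • φ (Pi.single i 1), ?_⟩
          change p i _ = _
          rw [hp, map_smul, h0]
          simp
      rw [hr]
      exact (rank_submodule_eq_one_iff _).2 ⟨_, Submodule.mem_span_singleton_self _, hne, le_rfl⟩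
  · rw [Finset.sum_range_succ', Finset.sum_range]
    simp only [hPs, hsum1, hP0]
    abel
  · intro j hj hjn
    rcases hcase j hjn with rfl | ⟨i, rfl⟩
    · omega
    · rw [hl]; exact hk i
  · intro z hz
    have h7 := (hV z hz).2.2.2.2.2
    have h8 : gsPhi φ ψ (Matrix.diagonal fun i => d i z) =
        P 0 + ∑ j ∈ Finset.Icc 1 n, (z - z₀) ^ (l j) • P j := by
      rw [gsPhi, ← hsum, hP0]
      congr 1
      have h9 : Finset.Icc 1 n = Finset.Ico 1 (n + 1) := by
        ext; simp only [Finset.mem_Icc, Finset.mem_Ico]; omega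
      rw [h9, Finset.sum_Ico_eq_sum_range, Nat.add_sub_cancel, Finset.sum_range]
      refine Finset.sum_congr rfl fun i _ => ?_
      rw [add_comm 1 (i : ℕ), hPs, hl, hdk]
    rw [h7, h8, mul_assoc]
    rfl
end

section
/- Let U ⊂ ℝ² be a nonempty compact set that is the closure of an open set, has finitely many connected components, and is such that every connected component of its boundary ∂U is path-connected and has zero two-dimensional Lebesgue measure. Let X > 0 be such that U ⊆ B_{X−1}(0). For n ∈ ℕ define the pixelation U_n := ⋃_{j ∈ L_n} ( j + [−1/(2n), 1/(2n)]² ), where L_n := { j ∈ (1/n)ℤ × (1/n)ℤ : j ∈ U }. Then dist_H(∂U_n, ∂U) + dist_H(B_X(0)\U_n, B_X(0)\U) → 0 as n → ∞, where dist_H denotes the Hausdorff distance between subsets of ℝ². -/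
open Filter Topology MeasureTheory

/-- The pixelation of a set `U ⊆ ℝ²` at resolution `1/n`: the union, over all grid points
`j ∈ (1/n)ℤ × (1/n)ℤ` lying in `U`, of the closed squares of side `1/n` centred at `j`. -/
def pixelation (U : Set (EuclideanSpace ℝ (Fin 2))) (n : ℕ) :
    Set (EuclideanSpace ℝ (Fin 2)) :=
  {x | ∃ j : EuclideanSpace ℝ (Fin 2),
    (∀ i : Fin 2, ∃ m : ℤ, j i = (m : ℝ) / n) ∧ j ∈ U ∧
    ∀ i : Fin 2, |x i - j i| ≤ 1 / (2 * n)}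

abbrev PixE := EuclideanSpace ℝ (Fin 2)

lemma pix_dist_le {x j : PixE} {n : ℕ} 
    (h : ∀ i : Fin 2, |x i - j i| ≤ 1 / (2 * (n:ℝ))) : dist x j ≤ 1 / (n:ℝ) := by
  have hn : (0:ℝ) ≤ 1 / (n:ℝ) := by positivity
  rw [EuclideanSpace.dist_eq, Real.sqrt_le_iff]
  refine ⟨hn, ?_⟩
  simp only [Fin.sum_univ_two, Real.dist_eq]
  have e : 1 / (2 * (n:ℝ)) = (1 / (n:ℝ)) / 2 := by rw [mul_comm, div_div]
  have h0 := h 0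
  have h1 := h 1
  rw [e] at h0 h1
  nlinarith [abs_nonneg (x 0 - j 0), abs_nonneg (x 1 - j 1)]

lemma pix_grid (x : PixE) {n : ℕ} (hn : 0 < n) :
    ∃ j : PixE, (∀ i : Fin 2, ∃ m : ℤ, j i = (m : ℝ) / n) ∧
      ∀ i : Fin 2, |x i - j i| ≤ 1 / (2 * (n:ℝ)) := by
  refine ⟨WithLp.toLp 2 (fun i => (round ((n:ℝ) * x i) : ℝ) / n), fun i => ⟨_, rfl⟩, fun i => ?_⟩
  have hn' : (0:ℝ) < n := by exact_mod_cast hn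
  have h := abs_sub_round ((n:ℝ) * x i)
  have e : x i - (round ((n:ℝ) * x i) : ℝ) / n
      = ((n:ℝ) * x i - round ((n:ℝ) * x i)) / n := by field_simp
  show |x i - (round ((n:ℝ) * x i) : ℝ) / n| ≤ _
  rw [e, abs_div, abs_of_pos hn', ← div_div]
  gcongr

lemma pix_mem {U : Set PixE} {n : ℕ} {x : PixE} (h : x ∈ pixelation U n) :
    ∃ j ∈ U, dist x j ≤ 1 / (n:ℝ) := by
  obtain ⟨j, _, hj, hd⟩ := h
  exact ⟨j, hj, pix_dist_le hd⟩

lemma pix_not_mem {U : Set PixE} {n : ℕ} (hn : 0 < n) {x : PixE} (h : x ∉ pixelation U n) :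
    ∃ j ∉ U, dist x j ≤ 1 / (n:ℝ) := by
  obtain ⟨j, hj, hd⟩ := pix_grid x hn
  exact ⟨j, fun hU => h ⟨j, hj, hU, hd⟩, pix_dist_le hd⟩

/-- A ball meeting a set and its complement meets the frontier. -/
lemma pix_frontier {S : Set PixE} {z a b : PixE} {r : ℝ} (ha : a ∈ S) (hb : b ∉ S)
    (hza : dist z a < r) (hzb : dist z b < r) : ∃ w ∈ frontier S, dist z w < r := by
  by_contra hcon
  push Not at hcon
  have hpre : IsPreconnected (Metric.ball z r) := (convex_ball z r).isPreconnected
  have := hpre (interior S) (interior Sᶜ) isOpen_interior isOpen_interior ?_ ⟨a, ?_⟩ ⟨b, ?_⟩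
  · obtain ⟨w, _, h1, h2⟩ := this
    exact interior_subset h2 (interior_subset h1)
  · intro w hw
    have hw' : w ∉ frontier S := fun h => absurd (hcon w h) (by
      rw [Metric.mem_ball, dist_comm] at hw; linarith)
    by_cases hS : w ∈ S
    · left
      by_contra hi
      exact hw' ⟨subset_closure hS, hi⟩
    · right
      by_contra hi
      rw [← frontier_compl] at hw'
      exact hw' ⟨subset_closure hS, hi⟩
  · refine ⟨by rwa [Metric.mem_ball, dist_comm], ?_⟩
    by_contra hi
    linarith [hcon a ⟨subset_closure ha, hi⟩]
  · refine ⟨by rwa [Metric.mem_ball, dist_comm], ?_⟩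
    by_contra hi
    have : b ∈ frontier S := by rw [← frontier_compl]; exact ⟨subset_closure hb, hi⟩
    linarith [hcon b this]

lemma pix_key {U V : Set PixE} (hU : IsCompact U) (hV : IsOpen V) (hUV : U = closure V)
    {ε : ℝ} (hε : 0 < ε) :
    ∀ᶠ n : ℕ in atTop, ∀ z ∈ frontier U,
      (∃ y ∈ pixelation U n, dist z y < ε) ∧ (∃ y ∉ pixelation U n, dist z y < ε) := by
  have hcl : IsClosed U := hU.isClosed
  have hK : IsCompact (frontier U) := hU.of_isClosed_subset isClosed_frontier hcl.frontier_subset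
  have hlim := tendsto_one_div_atTop_nhds_zero_nat (𝕜 := ℝ)
  refine hK.induction_on (p := fun s => ∀ᶠ n : ℕ in atTop, ∀ z ∈ s,
      (∃ y ∈ pixelation U n, dist z y < ε) ∧ (∃ y ∉ pixelation U n, dist z y < ε)) ?_ ?_ ?_ ?_
  · simp
  · intro s t hst ht
    filter_upwards [ht] with n h z hz using h z (hst hz)
  · intro s t hs ht
    filter_upwards [hs, ht] with n h1 h2 z hz
    exact hz.elim (h1 z) (h2 z)
  · intro z hz
    have hzU : z ∈ closure V := hUV ▸ hcl.frontier_subset hz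
    have hzC : z ∈ closure Uᶜ := by
      rw [← frontier_compl] at hz; exact hz.1
    obtain ⟨a, haV, ha⟩ := Metric.mem_closure_iff.1 hzU (ε/2) (by positivity)
    obtain ⟨b, hbU, hb⟩ := Metric.mem_closure_iff.1 hzC (ε/2) (by positivity)
    obtain ⟨d1, hd1, hB1⟩ := Metric.isOpen_iff.1 hV a haV
    obtain ⟨d2, hd2, hB2⟩ := Metric.isOpen_iff.1 hcl.isOpen_compl b hbU
    refine ⟨Metric.ball z (ε/2), mem_nhdsWithin_of_mem_nhds (Metric.ball_mem_nhds _ (by positivity)), ?_⟩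
    filter_upwards [hlim.eventually_lt_const hd1, hlim.eventually_lt_const hd2,
      eventually_gt_atTop 0] with n h1 h2 hn w hw
    rw [Metric.mem_ball] at hw
    refine ⟨⟨a, ?_, by linarith [dist_triangle w z a]⟩, ⟨b, ?_, by linarith [dist_triangle w z b]⟩⟩
    · by_contra hna
      obtain ⟨j, hj, hd⟩ := pix_not_mem hn hna
      apply hj
      rw [hUV]
      exact subset_closure (hB1 (by rw [Metric.mem_ball, dist_comm]; linarith))
    · intro hmb
      obtain ⟨j, hj, hd⟩ := pix_mem hmb
      exact hB2 (by rw [Metric.mem_ball, dist_comm]; linarith) hj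

/-- For a compact obstacle `U ⊂ ℝ²` that is the closure of an open set,
has finitely many connected components, and whose boundary components are path-connected
with zero area, the pixelations `Uₙ` of `U` converge geometrically:
`dist_H(∂Uₙ, ∂U) + dist_H(B_X(0)\Uₙ, B_X(0)\U) → 0`. -/
theorem pixelation_hausdorff_convergence
    (U : Set (EuclideanSpace ℝ (Fin 2)))
    (hUne : U.Nonempty) (hUcpt : IsCompact U)
    (hUreg : ∃ V : Set (EuclideanSpace ℝ (Fin 2)), IsOpen V ∧ U = closure V)
    (hUcomp : {C : Set (EuclideanSpace ℝ (Fin 2)) |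
        ∃ x ∈ U, C = connectedComponentIn U x}.Finite)
    (hbdry : ∀ x ∈ frontier U,
        IsPathConnected (connectedComponentIn (frontier U) x) ∧
        volume (connectedComponentIn (frontier U) x) = 0)
    (X : ℝ) (hX : 0 < X) (hUX : U ⊆ Metric.ball (0 : EuclideanSpace ℝ (Fin 2)) (X - 1)) :
    Tendsto (fun n : ℕ =>
        Metric.hausdorffDist (frontier (pixelation U n)) (frontier U) +
        Metric.hausdorffDist
          (Metric.ball (0 : EuclideanSpace ℝ (Fin 2)) X \ pixelation U n)
          (Metric.ball (0 : EuclideanSpace ℝ (Fin 2)) X \ U))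
      atTop (𝓝 0) := by
  obtain ⟨V, hV, hUV⟩ := hUreg
  have hcl : IsClosed U := hUcpt.isClosed
  have hlim := tendsto_one_div_atTop_nhds_zero_nat (𝕜 := ℝ)
  rw [Metric.tendsto_nhds]
  intro ε hε
  obtain ⟨δ, hδ, hδε, hδ1⟩ : ∃ δ : ℝ, 0 < δ ∧ 8 * δ ≤ ε ∧ 8 * δ ≤ 1 :=
    ⟨min ε 1 / 8, by positivity, by linarith [min_le_left ε 1], by linarith [min_le_right ε 1]⟩
  filter_upwards [pix_key hUcpt hV hUV hδ, hlim.eventually_lt_const hδ,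
    eventually_gt_atTop 0] with n hkey hnδ hn
  have H1 : Metric.hausdorffDist (frontier (pixelation U n)) (frontier U) ≤ 3 * δ := by
    apply Metric.hausdorffDist_le_of_mem_dist (by positivity)
    · intro x hx
      have hxC : x ∈ closure (pixelation U n)ᶜ := by
        have hx' := hx
        rw [← frontier_compl] at hx'; exact hx'.1
      obtain ⟨a, ha, hxa⟩ := Metric.mem_closure_iff.1 hx.1 δ hδ
      obtain ⟨b, hb, hxb⟩ := Metric.mem_closure_iff.1 hxC δ hδ
      obtain ⟨j, hj, hja⟩ := pix_mem ha
      obtain ⟨k, hk, hkb⟩ := pix_not_mem hn hb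
      obtain ⟨w, hw, hd⟩ := pix_frontier (z := x) (r := 3 * δ) hj hk
        (by linarith [dist_triangle x a j]) (by linarith [dist_triangle x b k])
      exact ⟨w, hw, hd.le⟩
    · intro z hz
      obtain ⟨⟨a, ha, hza⟩, ⟨b, hb, hzb⟩⟩ := hkey z hz
      obtain ⟨w, hw, hd⟩ := pix_frontier ha hb hza hzb
      exact ⟨w, hw, by linarith⟩
  have H2 : Metric.hausdorffDist
          (Metric.ball (0 : EuclideanSpace ℝ (Fin 2)) X \ pixelation U n)
          (Metric.ball (0 : EuclideanSpace ℝ (Fin 2)) X \ U) ≤ 3 * δ := by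
    apply Metric.hausdorffDist_le_of_mem_dist (by positivity)
    · rintro x ⟨hxX, hx⟩
      by_cases hxU : x ∈ U
      · obtain ⟨j, hj, hd⟩ := pix_not_mem hn hx
        have hx1 := hUX hxU
        rw [Metric.mem_ball] at hx1
        refine ⟨j, ⟨?_, hj⟩, by linarith⟩
        rw [Metric.mem_ball]
        linarith [dist_triangle_left j 0 x]
      · exact ⟨x, ⟨hxX, hxU⟩, by rw [dist_self]; positivity⟩
    · rintro x ⟨hxX, hx⟩
      by_cases hxP : x ∈ pixelation U n
      · obtain ⟨j, hj, hd⟩ := pix_mem hxP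
        obtain ⟨z, hz, hxz⟩ := pix_frontier (z := x) (r := δ) hj hx (by linarith)
          (by rwa [dist_self])
        obtain ⟨_, b, hb, hzb⟩ := hkey z hz
        have hz1 := hUX (hcl.frontier_subset hz)
        rw [Metric.mem_ball] at hz1
        refine ⟨b, ⟨?_, hb⟩, by linarith [dist_triangle x z b]⟩
        rw [Metric.mem_ball]
        linarith [dist_triangle_left b 0 z]
      · exact ⟨x, ⟨hxX, hxP⟩, by rw [dist_self]; positivity⟩
  rw [Real.dist_eq, sub_zero, abs_of_nonneg
    (add_nonneg Metric.hausdorffDist_nonneg Metric.hausdorffDist_nonneg)]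
  linarith
end
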